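/- Let G = (V, E) be a finite graph on n vertices with edge weights w : E → ℝ_{≥0} and vertex weights λ : V → ℝ_{≥0}, and define the weight of a matching M as weight(M) = Π_{e∈M} w(e) · Π_{v not covered by M} λ(v). Then for every k ≥ 0, the polynomial g(z₁,…,zₙ) = Σ_{M a matching of G with |M| = k} weight(M) · Π_{v not covered by M} z_v is either identically zero or Γ_{1/2}-stable (i.e., sector-stable for a sector of aperture π/2). -/

import Mathlib

open Finset
open scoped Classical

/-- `z` lies in the open sector `Γ_α` of aperture `απ` centered on the positive real axis. -/
def inSector (α : ℝ) (z : ℂ) : Prop := z ≠ 0 ∧ |z.arg| < α * Real.pi / 2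

/-- `M` is a matching of `G`: a set of edges of `G` that are pairwise vertex-disjoint. -/
def IsMatching {n : ℕ} (G : SimpleGraph (Fin n)) (M : Finset (Sym2 (Fin n))) : Prop :=
  (∀ e ∈ M, e ∈ G.edgeSet) ∧
    ∀ e ∈ M, ∀ f ∈ M, e ≠ f → ∀ v : Fin n, ¬(v ∈ e ∧ v ∈ f)

/-- The vertices not covered by the matching `M` (the monomers). -/
noncomputable def uncovered {n : ℕ} (M : Finset (Sym2 (Fin n))) : Finset (Fin n) :=
  Finset.univ.filter (fun v => ∀ e ∈ M, v ∉ e)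

/-- `weight(M) = Π_{e ∈ M} w(e) · Π_{v not covered by M} λ(v)`. -/
noncomputable def matchingWeight {n : ℕ} (w : Sym2 (Fin n) → ℝ) (lam : Fin n → ℝ)
    (M : Finset (Sym2 (Fin n))) : ℝ :=
  (∏ e ∈ M, w e) * ∏ v ∈ uncovered M, lam v

/-!
Replace `G` by the complete graph, with edge weights extended by zero. The Heilmann–Lieb
recursion at a vertex shows by induction that the monomer-dimer partition function does not
vanish when the edge weights are nonnegative and the vertex weights `x v` have positive real
part. If the `x v` lie in `Γ_{1/2}`, there is room to rotate them by `-arg t / 2` for any `t`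
with `Re t ≥ 0`; since the partition function is homogeneous, with edges of degree two and
vertices of degree one, it stays nonzero after all edge weights are multiplied by such a `t`. As
a polynomial in `t` it therefore has all its roots in the open left half plane, and by
Gauss–Lucas none of its coefficients vanishes up to its degree. For positive weights that degree
is the largest possible one, because a matching of maximal size leaves at most one vertex
uncovered; nonnegative weights are a limit of positive ones.

The Hurwitz-type limit theorem needs no complex analysis: a polynomial of degree at most `d`
whose roots are at distance at least `r` from `b` satisfies
`|p(a)| ≤ (1 + |a - b| / r) ^ d * |p(b)|`, and this bound passes to the limit.
-/

section GaussLucas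

open Polynomial

theorem coeff_ne_zero_of_zero_notMem_convexHull_rootSet {p : ℂ[X]} (hp : p ≠ 0)
    (h0 : (0 : ℂ) ∉ convexHull ℝ (p.rootSet ℂ)) {k : ℕ} (hk : k ≤ p.natDegree) :
    p.coeff k ≠ 0 := by
  induction k generalizing p with
  | zero =>
    rw [coeff_zero_eq_eval_zero]
    intro hroot
    exact h0 (subset_convexHull ℝ _ (mem_rootSet.2 ⟨hp, by simpa using hroot⟩))
  | succ k ih =>
    have hsub : convexHull ℝ (p.derivative.rootSet ℂ) ⊆ convexHull ℝ (p.rootSet ℂ) :=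
      convexHull_min (rootSet_derivative_subset_convexHull_rootSet
        (natDegree_pos_iff_degree_pos.1 (by lia))) (convex_convexHull ℝ _)
    have hp' : p.derivative ≠ 0 := fun h ↦ by
      have := derivative_eq_zero.1 h
      lia
    have hcoeff := ih hp' (fun h ↦ h0 (hsub h)) (by rw [natDegree_derivative]; lia)
    rw [coeff_derivative] at hcoeff
    exact left_ne_zero_of_mul hcoeff

end GaussLucas

section Hurwitz

theorem norm_eval_le_of_forall_ball_ne_zero {K : Type*} [NormedField K]
    {p : Polynomial K} (hp : p.Splits) {a b : K} {r : ℝ} (hr : 0 < r)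
    (hball : ∀ c ∈ Metric.ball b r, p.eval c ≠ 0) :
    ‖p.eval a‖ ≤ (1 + ‖a - b‖ / r) ^ p.natDegree * ‖p.eval b‖ := by
  have hroot : ∀ c ∈ p.roots, ‖a - c‖ ≤ (1 + ‖a - b‖ / r) * ‖b - c‖ := fun c hc ↦ by
    have hrc : r ≤ ‖b - c‖ := by
      by_contra! h
      exact hball c (by rwa [Metric.mem_ball, dist_comm, dist_eq_norm])
        (Polynomial.isRoot_of_mem_roots hc)
    calc ‖a - c‖ ≤ ‖a - b‖ + ‖b - c‖ := norm_sub_le_norm_sub_add_norm_sub a b c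
      _ = ‖a - b‖ / r * r + ‖b - c‖ := by rw [div_mul_cancel₀ _ hr.ne']
      _ ≤ ‖a - b‖ / r * ‖b - c‖ + ‖b - c‖ := by gcongr
      _ = (1 + ‖a - b‖ / r) * ‖b - c‖ := by ring
  have hnorm : ∀ x, ‖p.eval x‖ = ‖p.leadingCoeff‖ * (p.roots.map fun c ↦ ‖x - c‖).prod :=
    fun x ↦ by
      rw [hp.eval_eq_prod_roots, norm_mul]
      exact congrArg _ (Multiset.prod_hom' p.roots (normHom : K →*₀ ℝ) fun c ↦ x - c).symm
  rw [hnorm a, hnorm b, mul_left_comm]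
  gcongr
  calc (p.roots.map fun c ↦ ‖a - c‖).prod
      ≤ (p.roots.map fun c ↦ (1 + ‖a - b‖ / r) * ‖b - c‖).prod :=
        Multiset.prod_map_le_prod_map₀ _ _ (fun c _ ↦ norm_nonneg _) hroot
    _ = (1 + ‖a - b‖ / r) ^ p.natDegree * (p.roots.map fun c ↦ ‖b - c‖).prod := by
        rw [Multiset.prod_map_mul, Multiset.map_const', Multiset.prod_replicate,
          hp.natDegree_eq_card_roots]

open MvPolynomial Filter Topology in
theorem ne_zero_of_tendsto_eval {K σ ι : Type*} [NormedField K] [IsAlgClosed K]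
    {l : Filter ι} [l.NeBot] {p : ι → MvPolynomial σ K} {f : (σ → K) → K} {d : ℕ}
    (hd : ∀ i, (p i).totalDegree ≤ d)
    (hf : ∀ z, Tendsto (fun i ↦ eval z (p i)) l (𝓝 (f z))) {U : Set (σ → K)} (hU : IsOpen U)
    (hne : ∀ᶠ i in l, ∀ z ∈ U, eval z (p i) ≠ 0) {a b : σ → K} (ha : f a ≠ 0) (hb : b ∈ U) :
    f b ≠ 0 := by
  let line : σ → Polynomial K := fun v ↦ .C (b v - a v) * .X + .C (a v)
  have heval : ∀ i c, (aeval line (p i)).eval c = eval (fun v ↦ (b v - a v) * c + a v) (p i) :=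
    fun i c ↦ by
      rw [← Polynomial.coe_evalRingHom, map_aeval]
      exact eval₂Hom_congr (by ext; simp) (by ext; simp [line]) rfl
  have hdeg : ∀ i, (aeval line (p i)).natDegree ≤ d := fun i ↦ by
    simpa using aeval_natDegree_le (p i) (hd i) line fun v ↦ Polynomial.natDegree_linear_le
  obtain ⟨r, hr, hball⟩ := Metric.isOpen_iff.1
    (hU.preimage (f := fun c v ↦ (b v - a v) * c + a v) (by fun_prop)) 1 (by simpa using hb)
  have hbound : ∀ᶠ i in l, ‖eval a (p i)‖ ≤ (1 + 1 / r) ^ d * ‖eval b (p i)‖ := by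
    filter_upwards [hne] with i hi
    have := norm_eval_le_of_forall_ball_ne_zero
      (IsAlgClosed.splits (aeval line (p i))) (a := 0) hr
      fun c hc ↦ by rw [heval]; exact hi _ (hball hc)
    simp only [heval, mul_zero, zero_add, mul_one, sub_add_cancel, zero_sub, norm_neg,
      norm_one] at this
    refine this.trans ?_
    gcongr
    · simpa using hr.le
    · exact hdeg i
  have hlim : ‖f a‖ ≤ (1 + 1 / r) ^ d * ‖f b‖ :=
    le_of_tendsto_of_tendsto (hf a).norm ((hf b).norm.const_mul _) hbound
  intro hb0
  rw [hb0, norm_zero, mul_zero] at hlim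
  exact ha (norm_le_zero_iff.1 hlim)

end Hurwitz

section Sectors

open Complex

theorem isOpen_setOf_inSector {α : ℝ} (hα : α ≤ 2) : IsOpen {z | inSector α z} := by
  rw [isOpen_iff_mem_nhds]
  rintro z ⟨hz, harg⟩
  have hslit : z ∈ slitPlane := mem_slitPlane_iff_arg.2 ⟨fun hpi ↦ by
    rw [hpi, abs_of_pos Real.pi_pos] at harg
    nlinarith [Real.pi_pos], hz⟩
  filter_upwards [isOpen_ne.mem_nhds hz,
    (continuousAt_arg hslit).abs.eventually_lt_const harg] with y hy hyarg using ⟨hy, hyarg⟩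

theorem inSector.ofReal_mul {α : ℝ} {z : ℂ} (hz : inSector α z) {r : ℝ} (hr : 0 < r) :
    inSector α (r * z) :=
  ⟨mul_ne_zero (ofReal_ne_zero.2 hr.ne') hz.1, by rw [arg_real_mul z hr]; exact hz.2⟩

theorem re_exp_mul_I_mul_pos {z : ℂ} (hz : z ≠ 0) {θ : ℝ} (hθ : |θ + z.arg| < Real.pi / 2) :
    0 < (exp (θ * I) * z).re := by
  have hpolar : exp (θ * I) * z = ‖z‖ * exp ((θ + z.arg : ℝ) * I) := by
    conv_lhs => rw [← norm_mul_exp_arg_mul_I z]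
    rw [mul_left_comm, ← exp_add, ofReal_add, add_mul]
  rw [hpolar, re_ofReal_mul, exp_ofReal_mul_I_re]
  exact mul_pos (norm_pos_iff.2 hz) (Real.cos_pos_of_mem_Ioo (abs_lt.1 hθ))

theorem inSector.re_pos {α : ℝ} (hα : α ≤ 1) {z : ℂ} (hz : inSector α z) : 0 < z.re := by
  have harg : |z.arg| < Real.pi / 2 := hz.2.trans_le (by nlinarith [Real.pi_pos])
  exact (abs_arg_lt_pi_div_two_iff.1 harg).resolve_right hz.1

end Sectors

section Matchings

variable {V : Type*} [DecidableEq V]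

/-- The matchings of the complete graph on the vertex set `S`. -/
noncomputable def matchingsIn (S : Finset V) : Finset (Finset (Sym2 V)) :=
  {M ∈ S.sym2.powerset |
    (∀ e ∈ M, ¬e.IsDiag) ∧ ∀ e ∈ M, ∀ f ∈ M, ∀ v, v ∈ e → v ∈ f → e = f}

/-- The vertices of `S` missed by `M`. -/
def uncoveredIn (S : Finset V) (M : Finset (Sym2 V)) : Finset V :=
  {v ∈ S | ∀ e ∈ M, v ∉ e}

theorem mem_matchingsIn {S : Finset V} {M : Finset (Sym2 V)} :
    M ∈ matchingsIn S ↔ (∀ e ∈ M, ∀ v ∈ e, v ∈ S) ∧ (∀ e ∈ M, ¬e.IsDiag) ∧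
      ∀ e ∈ M, ∀ f ∈ M, ∀ v, v ∈ e → v ∈ f → e = f := by
  simp [matchingsIn, subset_iff]

theorem notMem_of_mem_matchingsIn {S : Finset V} {M : Finset (Sym2 V)} {v : V}
    (hM : M ∈ matchingsIn S) (hv : v ∉ S) {e : Sym2 V} (he : e ∈ M) : v ∉ e :=
  fun hve ↦ hv ((mem_matchingsIn.1 hM).1 e he v hve)

theorem empty_mem_matchingsIn (S : Finset V) : ∅ ∈ matchingsIn S := by
  simp [mem_matchingsIn]

theorem matchingsIn_empty : matchingsIn (∅ : Finset V) = {∅} := by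
  simp [matchingsIn]

theorem mk_notMem_of_mem_matchingsIn_erase {S : Finset V} {M : Finset (Sym2 V)} {u v : V}
    (hM : M ∈ matchingsIn (S.erase u)) : s(v, u) ∉ M :=
  fun h ↦ notMem_of_mem_matchingsIn hM (notMem_erase u S) h (Sym2.mem_mk_right v u)

theorem insert_mem_matchingsIn_insert {S : Finset V} {M : Finset (Sym2 V)} {u v : V} (hv : v ∉ S)
    (hu : u ∈ S) :
    insert s(v, u) M ∈ matchingsIn (insert v S) ∧ s(v, u) ∉ M ↔ M ∈ matchingsIn (S.erase u) := by
  have hdiag : ¬s(v, u).IsDiag := by grind [Sym2.mk_isDiag_iff]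
  have hmem : ∀ a, a ∈ s(v, u) ↔ a = v ∨ a = u := fun a ↦ Sym2.mem_iff
  generalize s(v, u) = e₀ at hdiag hmem ⊢
  simp only [mem_matchingsIn, mem_erase, mem_insert]
  constructor
  · rintro ⟨⟨hsub, hloop, hdisj⟩, he₀⟩
    refine ⟨fun e he a ha ↦ ?_, by grind, by grind⟩
    have := hdisj e (.inr he) e₀ (.inl rfl) a ha
    grind
  · grind

theorem matchingsIn_insert {S : Finset V} {v : V} (hv : v ∉ S) :
    matchingsIn (insert v S) = matchingsIn S ∪
      S.biUnion fun u ↦ (matchingsIn (S.erase u)).image (insert s(v, u)) := by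
  ext M
  simp only [mem_union, mem_biUnion, mem_image]
  constructor
  · intro hM
    by_cases hcov : ∀ e ∈ M, v ∉ e
    · left
      rw [mem_matchingsIn] at hM ⊢
      grind
    · right
      push Not at hcov
      obtain ⟨e, he, hve⟩ := hcov
      obtain ⟨u, rfl⟩ := Sym2.mem_iff_exists.1 hve
      have hu : u ∈ S := by
        have := (mem_matchingsIn.1 hM).1 _ he u (Sym2.mem_mk_right v u)
        have := (mem_matchingsIn.1 hM).2.1 _ he
        grind [Sym2.mk_isDiag_iff]
      refine ⟨u, hu, M.erase s(v, u), ?_, insert_erase he⟩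
      rw [← insert_mem_matchingsIn_insert hv hu, insert_erase he]
      exact ⟨hM, notMem_erase _ _⟩
  · rintro (hM | ⟨u, hu, M, hM, rfl⟩)
    · rw [mem_matchingsIn] at hM ⊢
      grind
    · exact ((insert_mem_matchingsIn_insert hv hu).2 hM).1

theorem sum_matchingsIn_insert {A : Type*} [AddCommMonoid A] (f : Finset (Sym2 V) → A)
    {S : Finset V} {v : V} (hv : v ∉ S) :
    ∑ M ∈ matchingsIn (insert v S), f M =
      ∑ M ∈ matchingsIn S, f M + ∑ u ∈ S, ∑ M ∈ matchingsIn (S.erase u), f (insert s(v, u) M) := by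
  have hcovers : ∀ u M, M ∈ (matchingsIn (S.erase u)).image (insert s(v, u)) → s(v, u) ∈ M := by
    grind
  rw [matchingsIn_insert hv, sum_union, sum_biUnion]
  · congr! 2 with u
    refine sum_image fun M hM N hN h ↦ ?_
    rw [← erase_insert (mk_notMem_of_mem_matchingsIn_erase hM (v := v)), h,
      erase_insert (mk_notMem_of_mem_matchingsIn_erase hN)]
  · intro u hu u' _ hne
    refine disjoint_left.2 fun M hM hM' ↦ hne ?_
    obtain ⟨N, hN, rfl⟩ := mem_image.1 hM
    have hN' := ((insert_mem_matchingsIn_insert hv hu).2 hN).1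
    exact Sym2.congr_right.1 ((mem_matchingsIn.1 hN').2.2 _ (hcovers u _ hM) _ (hcovers u' _ hM') v
      (Sym2.mem_mk_left v u) (Sym2.mem_mk_left v u'))
  · refine disjoint_left.2 fun M hM hM' ↦ ?_
    obtain ⟨u, -, hMu⟩ := mem_biUnion.1 hM'
    exact notMem_of_mem_matchingsIn hM hv (hcovers u M hMu) (Sym2.mem_mk_left v u)

theorem card_uncoveredIn_add {S : Finset V} {M : Finset (Sym2 V)} (hM : M ∈ matchingsIn S) :
    #(uncoveredIn S M) + 2 * #M = #S := by
  obtain ⟨hsub, hdiag, hdisj⟩ := mem_matchingsIn.1 hM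
  have hcov : uncoveredIn S M = S \ M.biUnion Sym2.toFinset := by
    ext v
    simp [uncoveredIn]
  have hcard : #(M.biUnion Sym2.toFinset) = 2 * #M := by
    rw [card_biUnion fun e he f hf hef ↦ disjoint_left.2 fun v hve hvf ↦
      hef (hdisj e he f hf v (Sym2.mem_toFinset.1 hve) (Sym2.mem_toFinset.1 hvf)),
      sum_congr rfl fun e he ↦ Sym2.card_toFinset_of_not_isDiag e (hdiag e he), sum_const,
      smul_eq_mul, mul_comm]
  rw [hcov, ← hcard]
  exact card_sdiff_add_card_eq_card (biUnion_subset.2 fun e he v hv ↦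
    hsub e he v (Sym2.mem_toFinset.1 hv))

theorem exists_mem_matchingsIn_card_eq {S : Finset V} {k : ℕ} (hk : 2 * k ≤ #S) :
    ∃ M ∈ matchingsIn S, #M = k := by
  induction k generalizing S with
  | zero => exact ⟨∅, empty_mem_matchingsIn S, card_empty⟩
  | succ k ih =>
    obtain ⟨v, hv⟩ : S.Nonempty := card_pos.1 (by lia)
    have hcard := card_erase_of_mem hv
    obtain ⟨u, hu⟩ : (S.erase v).Nonempty := card_pos.1 (by lia)
    obtain ⟨M, hM, rfl⟩ := ih (S := (S.erase v).erase u) (by rw [card_erase_of_mem hu]; lia)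
    refine ⟨insert s(v, u) M, ?_, card_insert_of_notMem (mk_notMem_of_mem_matchingsIn_erase hM)⟩
    rw [← insert_erase hv]
    exact ((insert_mem_matchingsIn_insert (notMem_erase v S) hu).2 hM).1

end Matchings

section PartitionFunction

open Polynomial

variable {V R : Type*} [DecidableEq V] [CommSemiring R]

/-- The weight `Π_{e ∈ M} w(e) · Π_v x(v)`, `v` ranging over the vertices of `S` missed by `M`. -/
def monomerDimerWeight (w : Sym2 V → R) (x : V → R) (S : Finset V) (M : Finset (Sym2 V)) : R :=
  (∏ e ∈ M, w e) * ∏ v ∈ uncoveredIn S M, x v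

/-- The monomer-dimer partition function of the complete graph on `S`. -/
noncomputable def monomerDimerSum (w : Sym2 V → R) (x : V → R) (S : Finset V) : R :=
  ∑ M ∈ matchingsIn S, monomerDimerWeight w x S M

/-- The monomer-dimer partition function graded by the number of dimers. -/
noncomputable def dimerPolynomial (w : Sym2 V → R) (x : V → R) (S : Finset V) : R[X] :=
  ∑ M ∈ matchingsIn S, C (monomerDimerWeight w x S M) * X ^ #M

theorem monomerDimerWeight_sq_mul_mul (c : R) (w : Sym2 V → R) (x : V → R) {S : Finset V}
    {M : Finset (Sym2 V)} (hM : M ∈ matchingsIn S) :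
    monomerDimerWeight (fun e ↦ c ^ 2 * w e) (fun v ↦ c * x v) S M =
      c ^ #S * monomerDimerWeight w x S M := by
  simp only [monomerDimerWeight, prod_mul_distrib, prod_const, ← card_uncoveredIn_add hM]
  ring

theorem monomerDimerSum_sq_mul_mul (c : R) (w : Sym2 V → R) (x : V → R) (S : Finset V) :
    monomerDimerSum (fun e ↦ c ^ 2 * w e) (fun v ↦ c * x v) S =
      c ^ #S * monomerDimerSum w x S := by
  rw [monomerDimerSum, monomerDimerSum, mul_sum]
  exact sum_congr rfl fun M hM ↦ monomerDimerWeight_sq_mul_mul c w x hM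

theorem monomerDimerWeight_insert_of_mem (w : Sym2 V → R) (x : V → R) {S : Finset V} {v : V}
    (hv : v ∉ S) {M : Finset (Sym2 V)} (hM : M ∈ matchingsIn S) :
    monomerDimerWeight w x (insert v S) M = x v * monomerDimerWeight w x S M := by
  have huncov : uncoveredIn (insert v S) M = insert v (uncoveredIn S M) := by
    rw [uncoveredIn, filter_insert, if_pos fun e ↦ notMem_of_mem_matchingsIn hM hv, uncoveredIn]
  have hv' : v ∉ uncoveredIn S M := fun h ↦ hv (mem_of_mem_filter v h)
  rw [monomerDimerWeight, huncov, prod_insert hv', mul_left_comm, monomerDimerWeight]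

theorem monomerDimerWeight_insert_insert (w : Sym2 V → R) (x : V → R) {S : Finset V} {u v : V}
    (hv : v ∉ S) {M : Finset (Sym2 V)} (hM : M ∈ matchingsIn (S.erase u)) :
    monomerDimerWeight w x (insert v S) (insert s(v, u) M) =
      w s(v, u) * monomerDimerWeight w x (S.erase u) M := by
  have huncov : uncoveredIn (insert v S) (insert s(v, u) M) = uncoveredIn (S.erase u) M := by
    ext a
    simp only [uncoveredIn, mem_filter, mem_insert, forall_eq_or_imp, Sym2.mem_iff, mem_erase]
    grind
  rw [monomerDimerWeight, huncov, prod_insert (mk_notMem_of_mem_matchingsIn_erase hM), mul_assoc,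
    monomerDimerWeight]

theorem monomerDimerSum_empty (w : Sym2 V → R) (x : V → R) : monomerDimerSum w x ∅ = 1 := by
  simp [monomerDimerSum, monomerDimerWeight, matchingsIn_empty, uncoveredIn]

theorem monomerDimerSum_insert (w : Sym2 V → R) (x : V → R) {S : Finset V} {v : V} (hv : v ∉ S) :
    monomerDimerSum w x (insert v S) =
      x v * monomerDimerSum w x S + ∑ u ∈ S, w s(v, u) * monomerDimerSum w x (S.erase u) := by
  simp only [monomerDimerSum, mul_sum]
  rw [sum_matchingsIn_insert _ hv]
  congr 1
  · exact sum_congr rfl fun M hM ↦ monomerDimerWeight_insert_of_mem w x hv hM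
  · exact sum_congr rfl fun u _ ↦ sum_congr rfl fun M hM ↦
      monomerDimerWeight_insert_insert w x hv hM

theorem eval_dimerPolynomial (w : Sym2 V → R) (x : V → R) (S : Finset V) (t : R) :
    (dimerPolynomial w x S).eval t = monomerDimerSum (fun e ↦ t * w e) x S := by
  simp only [dimerPolynomial, monomerDimerSum, monomerDimerWeight, eval_finsetSum, eval_mul,
    eval_C, eval_pow, eval_X, prod_mul_distrib, prod_const]
  exact sum_congr rfl fun M _ ↦ by ring

theorem coeff_dimerPolynomial (w : Sym2 V → R) (x : V → R) (S : Finset V) (k : ℕ) :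
    (dimerPolynomial w x S).coeff k =
      ∑ M ∈ matchingsIn S with #M = k, monomerDimerWeight w x S M := by
  simp only [dimerPolynomial, finsetSum_coeff, coeff_C_mul_X_pow, sum_filter, eq_comm]

end PartitionFunction

section HeilmannLieb

open Complex

variable {V : Type*} [DecidableEq V] {w : Sym2 V → ℝ} {x : V → ℂ}

theorem monomerDimerSum_ne_zero_and_re_div_pos (hw : ∀ e, 0 ≤ w e) (hx : ∀ v, 0 < (x v).re)
    (S : Finset V) :
    monomerDimerSum (fun e ↦ (w e : ℂ)) x S ≠ 0 ∧ ∀ v ∉ S,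
      0 < (monomerDimerSum (fun e ↦ (w e : ℂ)) x (insert v S) /
        monomerDimerSum (fun e ↦ (w e : ℂ)) x S).re := by
  set Z : Finset V → ℂ := monomerDimerSum (fun e ↦ (w e : ℂ)) x with hZ
  induction S using Finset.strongInduction with
  | H S ih =>
    have hratio : ∀ u ∈ S, 0 < (Z S / Z (S.erase u)).re := fun u hu ↦ by
      simpa only [insert_erase hu] using (ih _ (erase_ssubset hu)).2 u (notMem_erase u S)
    have hS : Z S ≠ 0 := by
      obtain rfl | ⟨u, hu⟩ := S.eq_empty_or_nonempty
      · simp [hZ, monomerDimerSum_empty]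
      · intro h
        simpa [h] using hratio u hu
    refine ⟨hS, fun v hv ↦ ?_⟩
    have hrec : Z (insert v S) / Z S =
        x v + ∑ u ∈ S, (w s(v, u) : ℂ) * (Z S / Z (S.erase u))⁻¹ := by
      rw [hZ, monomerDimerSum_insert _ _ hv, ← hZ, add_div, mul_div_cancel_right₀ _ hS, sum_div]
      simp only [inv_div, mul_div_assoc]
    rw [hrec, add_re, re_sum]
    refine add_pos_of_pos_of_nonneg (hx v) (sum_nonneg fun u hu ↦ ?_)
    rw [re_ofReal_mul, inv_re]
    exact mul_nonneg (hw _) (div_nonneg (hratio u hu).le (normSq_nonneg _))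

theorem monomerDimerSum_ne_zero (hw : ∀ e, 0 ≤ w e) (hx : ∀ v, 0 < (x v).re) (S : Finset V) :
    monomerDimerSum (fun e ↦ (w e : ℂ)) x S ≠ 0 :=
  (monomerDimerSum_ne_zero_and_re_div_pos hw hx S).1

theorem eval_dimerPolynomial_ne_zero (hw : ∀ e, 0 ≤ w e) (hx : ∀ v, inSector (1 / 2) (x v))
    (S : Finset V) {t : ℂ} (ht : 0 ≤ t.re) :
    (dimerPolynomial (fun e ↦ (w e : ℂ)) x S).eval t ≠ 0 := by
  set c : ℂ := exp ((t.arg / 2 : ℝ) * I) with hc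
  have hct : c ^ 2 * ‖t‖ = t := by
    rw [hc, ← exp_nat_mul, mul_comm]
    convert norm_mul_exp_arg_mul_I t using 3
    push_cast
    ring
  have hcx : ∀ v, 0 < (c⁻¹ * x v).re := fun v ↦ by
    rw [hc, ← exp_neg, ← neg_mul, ← ofReal_neg]
    refine re_exp_mul_I_mul_pos (hx v).1 ?_
    have hθ := abs_le.1 (abs_arg_le_pi_div_two_iff.2 ht)
    have hxv := abs_lt.1 (hx v).2
    exact abs_lt.2 ⟨by linarith, by linarith⟩
  have hscale : monomerDimerSum (fun e ↦ t * (w e : ℂ)) x S =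
      c ^ #S * monomerDimerSum (fun e ↦ ((‖t‖ * w e : ℝ) : ℂ)) (fun v ↦ c⁻¹ * x v) S := by
    rw [← monomerDimerSum_sq_mul_mul]
    congr! 2 with e v
    · rw [ofReal_mul, ← mul_assoc, hct]
    · rw [mul_inv_cancel_left₀ (exp_ne_zero _)]
  rw [eval_dimerPolynomial, hscale]
  exact mul_ne_zero (pow_ne_zero _ (exp_ne_zero _))
    (monomerDimerSum_ne_zero (fun e ↦ mul_nonneg (norm_nonneg t) (hw e)) hcx S)

theorem re_monomerDimerWeight_pos (hw : ∀ e, 0 < w e) (hx : ∀ v, 0 < (x v).re) {S : Finset V}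
    {M : Finset (Sym2 V)} (hM : #(uncoveredIn S M) ≤ 1) :
    0 < (monomerDimerWeight (fun e ↦ (w e : ℂ)) x S M).re := by
  rw [monomerDimerWeight, ← ofReal_prod, re_ofReal_mul]
  refine mul_pos (prod_pos fun e _ ↦ hw e) ?_
  obtain h | h := Nat.le_one_iff_eq_zero_or_eq_one.1 hM
  · simp [card_eq_zero.1 h]
  · obtain ⟨v, hv⟩ := card_eq_one.1 h
    simpa [hv] using hx v

theorem coeff_dimerPolynomial_card_div_two_ne_zero (hw : ∀ e, 0 < w e) (hx : ∀ v, 0 < (x v).re)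
    (S : Finset V) : (dimerPolynomial (fun e ↦ (w e : ℂ)) x S).coeff (#S / 2) ≠ 0 := by
  obtain ⟨M, hM, hcard⟩ := exists_mem_matchingsIn_card_eq (Nat.mul_div_le #S 2)
  have hpos : 0 < ((dimerPolynomial (fun e ↦ (w e : ℂ)) x S).coeff (#S / 2)).re := by
    rw [coeff_dimerPolynomial, re_sum]
    refine sum_pos (fun N hN ↦ ?_) ⟨M, mem_filter.2 ⟨hM, hcard⟩⟩
    obtain ⟨hN, hNcard⟩ := mem_filter.1 hN
    exact re_monomerDimerWeight_pos hw hx (by have := card_uncoveredIn_add hN; lia)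
  intro h
  simp [h] at hpos

theorem coeff_dimerPolynomial_ne_zero (hw : ∀ e, 0 < w e) (hx : ∀ v, inSector (1 / 2) (x v))
    {S : Finset V} {k : ℕ} (hk : 2 * k ≤ #S) :
    (dimerPolynomial (fun e ↦ (w e : ℂ)) x S).coeff k ≠ 0 := by
  set p := dimerPolynomial (fun e ↦ (w e : ℂ)) x S
  have hlead : p.coeff (#S / 2) ≠ 0 :=
    coeff_dimerPolynomial_card_div_two_ne_zero hw (fun v ↦ (hx v).re_pos (by norm_num)) S
  have hroots : convexHull ℝ (p.rootSet ℂ) ⊆ {t | t.re < 0} := by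
    refine convexHull_min (fun t ht ↦ ?_) (convex_halfSpace_re_lt 0)
    by_contra! hre
    exact eval_dimerPolynomial_ne_zero (fun e ↦ (hw e).le) hx S (not_lt.1 hre)
      (by simpa using (Polynomial.mem_rootSet.1 ht).2)
  refine coeff_ne_zero_of_zero_notMem_convexHull_rootSet (p := p) ?_ ?_ ?_
  · intro h
    simp [h] at hlead
  · exact fun h ↦ by simpa using hroots h
  · have := Polynomial.le_natDegree_of_ne_zero hlead
    lia

end HeilmannLieb

section SectorStability

open MvPolynomial Filter Topology

variable {σ : Type*}

/-- A polynomial is `Γ_α`-stable if it has no zero with all coordinates in the sector `Γ_α`. -/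
def SectorStable (α : ℝ) (p : MvPolynomial σ ℂ) : Prop :=
  ∀ z : σ → ℂ, (∀ v, inSector α (z v)) → eval z p ≠ 0

theorem SectorStable.of_tendsto_eval [Finite σ] {ι : Type*} {l : Filter ι} [l.NeBot] {α : ℝ}
    (hα : α ≤ 2) {p : ι → MvPolynomial σ ℂ} {q : MvPolynomial σ ℂ} {d : ℕ}
    (hd : ∀ i, (p i).totalDegree ≤ d)
    (hlim : ∀ z, Tendsto (fun i ↦ eval z (p i)) l (𝓝 (eval z q)))
    (hp : ∀ᶠ i in l, SectorStable α (p i)) (hq : q ≠ 0) : SectorStable α q := by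
  obtain ⟨a, ha⟩ : ∃ a, eval a q ≠ 0 := by
    contrapose! hq
    exact MvPolynomial.funext (by simpa using hq)
  have hopen : IsOpen {z : σ → ℂ | ∀ v, inSector α (z v)} := by
    simp only [Set.ofPred_forall]
    exact isOpen_iInter_of_finite fun v ↦
      (isOpen_setOf_inSector hα).preimage (f := fun z : σ → ℂ ↦ z v) (by fun_prop)
  exact fun z hz ↦ ne_zero_of_tendsto_eval hd hlim hopen hp ha hz

end SectorStability

section MonomerPolynomial

open MvPolynomial Filter Topology

variable {V : Type*} [Fintype V] [DecidableEq V]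

/-- The monomer polynomial `Σ_M weight(M) · Π_v z_v` of the `k`-matchings `M` of the complete graph
on `V`, the inner product being over the vertices missed by `M`. -/
noncomputable def monomerPoly {R : Type*} [CommSemiring R] (w : Sym2 V → R) (lam : V → R) (k : ℕ) :
    MvPolynomial V R :=
  ∑ M ∈ matchingsIn univ with #M = k,
    C (monomerDimerWeight w lam univ M) * ∏ v ∈ uncoveredIn univ M, X v

theorem eval_monomerPoly {R : Type*} [CommSemiring R] (w : Sym2 V → R) (lam z : V → R) (k : ℕ) :
    eval z (monomerPoly w lam k) =
      ∑ M ∈ matchingsIn univ with #M = k,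
        monomerDimerWeight w lam univ M * ∏ v ∈ uncoveredIn univ M, z v := by
  simp [monomerPoly]

theorem eval_monomerPoly_eq_coeff {R : Type*} [CommSemiring R] (w : Sym2 V → R) (lam z : V → R)
    (k : ℕ) :
    eval z (monomerPoly w lam k) = (dimerPolynomial w (fun v ↦ lam v * z v) univ).coeff k := by
  simp only [eval_monomerPoly, coeff_dimerPolynomial, monomerDimerWeight, prod_mul_distrib,
    mul_assoc]

theorem totalDegree_monomerPoly_le {R : Type*} [CommSemiring R] [Nontrivial R] (w : Sym2 V → R)
    (lam : V → R) (k : ℕ) : (monomerPoly w lam k).totalDegree ≤ Fintype.card V := by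
  refine totalDegree_finsetSum_le fun M _ ↦ (totalDegree_mul _ _).trans ?_
  rw [totalDegree_C, zero_add]
  refine (totalDegree_finsetProd _ _).trans ?_
  simpa only [totalDegree_X, sum_const, smul_eq_mul, mul_one] using card_le_univ _

theorem monomerPoly_eq_zero_of_card_lt {R : Type*} [CommSemiring R] (w : Sym2 V → R) (lam : V → R)
    {k : ℕ} (hk : Fintype.card V < 2 * k) : monomerPoly w lam k = 0 := by
  refine sum_eq_zero fun M hM ↦ ?_
  obtain ⟨hM, hcard⟩ := mem_filter.1 hM
  have := card_uncoveredIn_add hM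
  rw [card_univ] at this
  lia

theorem sectorStable_monomerPoly_of_pos {w : Sym2 V → ℝ} {lam : V → ℝ} (hw : ∀ e, 0 < w e)
    (hlam : ∀ v, 0 < lam v) {k : ℕ} (hk : 2 * k ≤ Fintype.card V) :
    SectorStable (1 / 2) (monomerPoly (fun e ↦ (w e : ℂ)) (fun v ↦ (lam v : ℂ)) k) := fun z hz ↦ by
  rw [eval_monomerPoly_eq_coeff]
  exact coeff_dimerPolynomial_ne_zero hw (fun v ↦ (hz v).ofReal_mul (hlam v)) (by simpa using hk)

theorem kMatching_monomer_poly_sectorStable_general {w : Sym2 V → ℝ} {lam : V → ℝ}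
    (hw : ∀ e, 0 ≤ w e) (hlam : ∀ v, 0 ≤ lam v) (k : ℕ) :
    monomerPoly (fun e ↦ (w e : ℂ)) (fun v ↦ (lam v : ℂ)) k = 0 ∨
      SectorStable (1 / 2) (monomerPoly (fun e ↦ (w e : ℂ)) (fun v ↦ (lam v : ℂ)) k) := by
  refine or_iff_not_imp_left.2 fun hne ↦ ?_
  have hk : 2 * k ≤ Fintype.card V := not_lt.1 fun h ↦ hne (monomerPoly_eq_zero_of_card_lt _ _ h)
  refine SectorStable.of_tendsto_eval (l := 𝓝[>] (0 : ℝ)) (by norm_num)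
    (p := fun ε ↦ monomerPoly (fun e ↦ ((w e + ε : ℝ) : ℂ)) (fun v ↦ ((lam v + ε : ℝ) : ℂ)) k)
    (fun ε ↦ totalDegree_monomerPoly_le _ _ k) (fun z ↦ ?_) ?_ hne
  · have hcont : Continuous fun ε : ℝ ↦ eval z
        (monomerPoly (fun e ↦ ((w e + ε : ℝ) : ℂ)) (fun v ↦ ((lam v + ε : ℝ) : ℂ)) k) := by
      simp only [eval_monomerPoly, monomerDimerWeight]
      fun_prop
    simpa using (hcont.tendsto 0).mono_left nhdsWithin_le_nhds
  · filter_upwards [self_mem_nhdsWithin] with ε (hε : 0 < ε)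
    exact sectorStable_monomerPoly_of_pos (fun e ↦ by linarith [hw e])
      (fun v ↦ by linarith [hlam v]) hk

end MonomerPolynomial

theorem uncoveredIn_univ {n : ℕ} (M : Finset (Sym2 (Fin n))) :
    uncoveredIn univ M = uncovered M := by
  ext v
  simp only [uncoveredIn, uncovered, mem_filter]

theorem isMatching_iff_mem_matchingsIn {n : ℕ} {G : SimpleGraph (Fin n)}
    {M : Finset (Sym2 (Fin n))} :
    IsMatching G M ↔ M ∈ matchingsIn univ ∧ ∀ e ∈ M, e ∈ G.edgeSet := by
  have hdiag : ∀ e ∈ G.edgeSet, ¬e.IsDiag := fun _ ↦ G.not_isDiag_of_mem_edgeSet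
  simp only [IsMatching, mem_matchingsIn]
  grind

theorem sum_isMatching_eq_eval_monomerPoly {n : ℕ} (G : SimpleGraph (Fin n))
    (w : Sym2 (Fin n) → ℝ) (lam : Fin n → ℝ) (k : ℕ) (z : Fin n → ℂ) :
    ∑ M : Finset (Sym2 (Fin n)) with IsMatching G M ∧ #M = k,
        (matchingWeight w lam M : ℂ) * ∏ v ∈ uncovered M, z v =
      MvPolynomial.eval z (monomerPoly (fun e ↦ ((G.edgeSet.indicator w e : ℝ) : ℂ))
        (fun v ↦ (lam v : ℂ)) k) := by
  rw [eval_monomerPoly]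
  refine sum_subset_zero_on_sdiff (fun M hM ↦ ?_) (fun M hM ↦ ?_) fun M hM ↦ ?_
  · simp only [mem_filter, isMatching_iff_mem_matchingsIn] at hM ⊢
    exact ⟨hM.2.1.1, hM.2.2⟩
  · simp only [mem_sdiff, mem_filter, isMatching_iff_mem_matchingsIn] at hM
    obtain ⟨e, he, heG⟩ : ∃ e ∈ M, e ∉ G.edgeSet := by grind
    rw [monomerDimerWeight, prod_eq_zero he (by simp [heG]), zero_mul, zero_mul]
  · have hedges : ∏ e ∈ M, G.edgeSet.indicator w e = ∏ e ∈ M, w e :=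
      prod_congr rfl fun e he ↦ Set.indicator_of_mem ((mem_filter.1 hM).2.1.1 e he) w
    rw [matchingWeight, monomerDimerWeight, ← Complex.ofReal_prod, hedges]
    push_cast
    simp only [uncoveredIn_univ]

/-- The polynomial `g(z) = Σ_{M matching of G, |M| = k} weight(M) Π_{v ∉ V(M)} z_v`
encoding the monomers of `k`-matchings is either identically zero or `Γ_{1/2}`-stable. -/
theorem kMatching_monomer_poly_sectorStable (n : ℕ) (G : SimpleGraph (Fin n))
    (w : Sym2 (Fin n) → ℝ) (hw : ∀ e ∈ G.edgeSet, 0 ≤ w e)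
    (lam : Fin n → ℝ) (hlam : ∀ v, 0 ≤ lam v) (k : ℕ) :
    (∀ z : Fin n → ℂ,
      (∑ M ∈ Finset.univ.filter
          (fun M : Finset (Sym2 (Fin n)) => IsMatching G M ∧ M.card = k),
        (matchingWeight w lam M : ℂ) * ∏ v ∈ uncovered M, z v) = 0) ∨
    (∀ z : Fin n → ℂ, (∀ v, inSector (1 / 2) (z v)) →
      (∑ M ∈ Finset.univ.filter
          (fun M : Finset (Sym2 (Fin n)) => IsMatching G M ∧ M.card = k),
        (matchingWeight w lam M : ℂ) * ∏ v ∈ uncovered M, z v) ≠ 0) := by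
  simp only [sum_isMatching_eq_eval_monomerPoly]
  exact (kMatching_monomer_poly_sectorStable_general (Set.indicator_nonneg hw) hlam k).imp_left
    fun h z ↦ by rw [h, map_zero]
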